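/- Let φ(x,t) = t^p + a(x) t^q with 1 < p < q < ∞, a a nonnegative function in C^{0,α}(ℝⁿ) for some α ∈ (0,1], and assume q/p ≤ 1 + α/n. Let Ω ⊆ ℝⁿ be open and suppose ℝⁿ∖Ω is locally uniformly infimally φ-fat with parameters c_fat > 0 and 0 < r_o ≤ 1. Then there is a constant c = c(n,p,q,c_fat) such that for every z ∈ ℝⁿ∖Ω, every 0 < r < r_o in the (p,q)-phase, i.e. with inf_{B(z,r)} a > [a]_{0,α} r^α, and every u ∈ Lip_0(Ω): ⨍_{B(z,r)} φ(x,|u(x)|) dx ≤ c · ⨍_{B(z,r)} φ(x, r|∇u(x)|) dx. -/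

import Mathlib

open MeasureTheory Metric Set

noncomputable section

/-- Euclidean space `ℝⁿ`. -/
abbrev En (n : ℕ) : Type := EuclideanSpace ℝ (Fin n)

/-- Norm of the (a.e. defined, by Rademacher's theorem) gradient of `u` at `x`. -/
def gnorm {n : ℕ} (u : En n → ℝ) (x : En n) : ℝ := ‖fderiv ℝ u x‖

/-- Admissible test functions for the level-`t` capacity of `E` in `O`:
Lipschitz on the closure of `O`, `u ≥ t` on `E`, `u = 0` on `∂O`. -/
def Adm {n : ℕ} (E O : Set (En n)) (t : ℝ) : Set (En n → ℝ) :=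
  {u | (∃ K, LipschitzOnWith K u (closure O)) ∧ (∀ x ∈ E, t ≤ u x) ∧
    ∀ x ∈ frontier O, u x = 0}

/-- Level-`t` variational capacity with integrand `ψ` and normalization `ψm`. -/
def capLevel {n : ℕ} (ψ : En n → ℝ → ℝ) (ψm : ℝ → ℝ)
    (E O : Set (En n)) (t : ℝ) : ℝ :=
  sInf ((fun u => ∫ x in O, ψ x (gnorm u x) / ψm t) '' Adm E O t)

/-- Infimal capacity with integrand `ψ` and normalization `ψm`. -/
def capInfGen {n : ℕ} (ψ : En n → ℝ → ℝ) (ψm : ℝ → ℝ) (E O : Set (En n)) : ℝ :=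
  ⨅ t : Ioi (0 : ℝ), capLevel ψ ψm E O (t : ℝ)

/-- The double-phase integrand `φ(x,t) = t^p + a(x) t^q`. -/
def phi {n : ℕ} (a : En n → ℝ) (p q : ℝ) (x : En n) (t : ℝ) : ℝ :=
  t ^ p + a x * t ^ q

/-- `a_O^- = inf_{x ∈ O} a(x)`. -/
def aInfOn {n : ℕ} (a : En n → ℝ) (O : Set (En n)) : ℝ := sInf (a '' O)

/-- `a_O^+ = sup_{x ∈ O} a(x)`. -/
def aSupOn {n : ℕ} (a : En n → ℝ) (O : Set (En n)) : ℝ := sSup (a '' O)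

/-- `φ_O^-(t) = t^p + a_O^- t^q`. -/
def phiMinus {n : ℕ} (a : En n → ℝ) (p q : ℝ) (O : Set (En n)) (t : ℝ) : ℝ :=
  t ^ p + aInfOn a O * t ^ q

/-- Level-`t` variational capacity for the double-phase integrand. -/
def capPhiLevel {n : ℕ} (a : En n → ℝ) (p q t : ℝ) (E O : Set (En n)) : ℝ :=
  capLevel (phi a p q) (phiMinus a p q O) E O t

/-- Infimal `φ`-capacity. -/
def capPhiInf {n : ℕ} (a : En n → ℝ) (p q : ℝ) (E O : Set (En n)) : ℝ :=
  ⨅ t : Ioi (0 : ℝ), capPhiLevel a p q (t : ℝ) E O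

/-- Variational `p`-capacity. -/
def capP {n : ℕ} (p : ℝ) (E O : Set (En n)) : ℝ :=
  sInf ((fun u => ∫ x in O, gnorm u x ^ p) '' Adm E O 1)

/-- The rescaled set `{x ∈ B̄(0,1/2) : z + r x ∈ E}`. -/
def shiftedSet {n : ℕ} (E : Set (En n)) (z : En n) (r : ℝ) : Set (En n) :=
  {x ∈ closedBall (0 : En n) (1 / 2) | z + r • x ∈ E}

/-- Local uniform infimal `φ`-fatness with parameters `cfat` and `ro`. -/
def LocUnifPhiFat {n : ℕ} (a : En n → ℝ) (p q : ℝ) (E : Set (En n))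
    (cfat ro : ℝ) : Prop :=
  ∀ z ∈ E, ∀ r : ℝ, 0 < r → r < ro →
    cfat ≤ capPhiInf (fun x => a (z + r • x)) p q (shiftedSet E z r) (ball (0 : En n) 1)

/-- Local uniform `p`-fatness with parameters `cfat` and `ro`. -/
def LocUnifPFat {n : ℕ} (p : ℝ) (E : Set (En n)) (cfat ro : ℝ) : Prop :=
  ∀ z ∈ E, ∀ r : ℝ, 0 < r → r < ro →
    cfat ≤ capP p (shiftedSet E z r) (ball (0 : En n) 1)

/-- `Lip_0(Ω)`: Lipschitz functions with compact support contained in `Ω`,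
extended by zero to `ℝⁿ`. -/
def Lip0 {n : ℕ} (Ω : Set (En n)) : Set (En n → ℝ) :=
  {u | (∃ K, LipschitzWith K u) ∧ HasCompactSupport u ∧ tsupport u ⊆ Ω}

/-- Restricted centered maximal operator `M_R f(x) = sup_{0<r<R} ⨍_{B(x,r)} |f|`. -/
def maxOp {n : ℕ} (R : ℝ) (f : En n → ℝ) (x : En n) : ℝ :=
  ⨆ r : Ioo (0 : ℝ) R, ⨍ y in ball x (r : ℝ), |f y|

/-!
In the `(p,q)`-phase the oscillation of `a` on the ball is at most twice its infimum, so `φ` is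
comparable there, with constant `3`, to the convex function `φ⁻`, which does not depend on `x`.
After rescaling to the unit ball, let `v` vanish on `E`. For every real `d` one of `±(v - d)` equals
`|d|` on `E`; times a cutoff it competes for the capacity of `E`, so fatness gives
`φ⁻(|d|) ≤ C ∫ (φ⁻(|∇v|) + φ⁻(|v - d|))`. Choosing `d = v y` and integrating in `y`, the last term
becomes a double integral, which Jensen's inequality along the segments from `x` to `y` bounds by
the gradient term.
-/

open scoped NNReal ENNReal

section Integration

lemma ofReal_coe_mul (c : ℝ≥0) (x : ℝ) : ENNReal.ofReal (c * x) = c * ENNReal.ofReal x := by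
  rw [ENNReal.ofReal_mul c.coe_nonneg, ENNReal.ofReal_coe_nnreal]

variable {α : Type*} [MeasurableSpace α] {μ : Measure α} {f : α → ℝ}

lemma ofReal_integral_le_lintegral_ofReal (hf : 0 ≤ᵐ[μ] f) :
    ENNReal.ofReal (∫ x, f x ∂μ) ≤ ∫⁻ x, ENNReal.ofReal (f x) ∂μ :=
  calc ENNReal.ofReal (∫ x, f x ∂μ) ≤ ‖∫ x, f x ∂μ‖ₑ := Real.ofReal_le_enorm _
    _ ≤ ∫⁻ x, ‖f x‖ₑ ∂μ := enorm_integral_le_lintegral_enorm f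
    _ = ∫⁻ x, ENNReal.ofReal (f x) ∂μ := lintegral_congr_ae <| by
      filter_upwards [hf] with x hx using Real.enorm_of_nonneg hx

end Integration

section YoungFunction

/-- Young functions, the convex profiles measuring the size of functions and of their gradients.
They live on `[0, ∞)`; the values on the negative half-line are irrelevant, and continuity is
required on all of `ℝ` so that compositions are measurable. -/
structure IsYoungFunction (Ψ : ℝ → ℝ) : Prop where
  convexOn : ConvexOn ℝ (Ici 0) Ψ
  continuous : Continuous Ψ
  map_zero : Ψ 0 = 0
  nonneg : ∀ t, 0 ≤ t → 0 ≤ Ψ t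

/-- Young functions satisfying the `Δ₂` condition with constant `C`. -/
structure IsDoublingYoungFunction (Ψ : ℝ → ℝ) (C : ℝ≥0) : Prop extends IsYoungFunction Ψ where
  doubling : ∀ t, 0 ≤ t → Ψ (2 * t) ≤ C * Ψ t

variable {Ψ : ℝ → ℝ} {C : ℝ≥0}

lemma IsYoungFunction.monotoneOn (hΨ : IsYoungFunction Ψ) : MonotoneOn Ψ (Ici 0) := by
  intro s hs t ht hst
  have h := hΨ.convexOn.le_max_of_mem_Icc self_mem_Ici ht ⟨hs, hst⟩
  rwa [hΨ.map_zero, max_eq_right (hΨ.nonneg t ht)] at h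

lemma IsYoungFunction.mono (hΨ : IsYoungFunction Ψ) {s t : ℝ} (hs : 0 ≤ s) (hst : s ≤ t) :
    Ψ s ≤ Ψ t :=
  hΨ.monotoneOn hs (hs.trans hst) hst

lemma IsYoungFunction.ofReal_map_integral_le_lintegral {α : Type*} [MeasurableSpace α]
    {μ : Measure α} [IsProbabilityMeasure μ] (hΨ : IsYoungFunction Ψ) {f : α → ℝ}
    (hf : Integrable f μ) (hf0 : ∀ x, 0 ≤ f x) :
    ENNReal.ofReal (Ψ (∫ x, f x ∂μ)) ≤ ∫⁻ x, ENNReal.ofReal (Ψ (f x)) ∂μ := by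
  have hΨf0 : 0 ≤ᵐ[μ] fun x => Ψ (f x) := .of_forall fun x => hΨ.nonneg _ (hf0 x)
  by_cases hfin : ∫⁻ x, ENNReal.ofReal (Ψ (f x)) ∂μ = ⊤
  · exact hfin ▸ le_top
  have hΨf : Integrable (fun x => Ψ (f x)) μ :=
    (lintegral_ofReal_ne_top_iff_integrable
      (hΨ.continuous.comp_aestronglyMeasurable hf.aestronglyMeasurable) hΨf0).1 hfin
  rw [← ofReal_integral_eq_lintegral_ofReal hΨf hΨf0]
  exact ENNReal.ofReal_le_ofReal <| hΨ.convexOn.map_integral_le hΨ.continuous.continuousOn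
    isClosed_Ici (.of_forall hf0) hf hΨf

lemma IsDoublingYoungFunction.map_two_mul_add_le (hΨ : IsDoublingYoungFunction Ψ C) {s t : ℝ}
    (hs : 0 ≤ s) (ht : 0 ≤ t) : Ψ (2 * s + 2 * t) ≤ C ^ 2 * (Ψ s + Ψ t) := by
  wlog hst : s ≤ t generalizing s t
  · rw [add_comm (2 * s), add_comm (Ψ s)]
    exact this ht hs (le_of_not_ge hst)
  calc Ψ (2 * s + 2 * t) ≤ Ψ (2 * (2 * t)) := hΨ.mono (by positivity) (by linarith)
    _ ≤ C * (C * Ψ t) := (hΨ.doubling _ (by positivity)).trans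
        (mul_le_mul_of_nonneg_left (hΨ.doubling t ht) C.coe_nonneg)
    _ = C ^ 2 * Ψ t := by ring
    _ ≤ C ^ 2 * (Ψ s + Ψ t) := by
        gcongr
        exact le_add_of_nonneg_left (hΨ.nonneg s hs)

end YoungFunction

section Segments

open AffineMap

variable {V : Type*} [NormedAddCommGroup V] [NormedSpace ℝ V] {v : V → ℝ} {K : ℝ≥0}
  {Ψ : ℝ → ℝ}

lemma IsYoungFunction.ofReal_map_abs_sub_le_lintegral_deriv (hΨ : IsYoungFunction Ψ) {g : ℝ → ℝ}
    (hg : AbsolutelyContinuousOnInterval g 0 1) :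
    ENNReal.ofReal (Ψ |g 1 - g 0|) ≤ ∫⁻ t in Ioc 0 1, ENNReal.ofReal (Ψ |deriv g t|) := by
  have : IsProbabilityMeasure (volume.restrict (Ioc (0 : ℝ) 1)) := ⟨by simp⟩
  have hint : IntegrableOn (fun t => |deriv g t|) (Ioc 0 1) := hg.intervalIntegrable_deriv.1.abs
  have hle : |g 1 - g 0| ≤ ∫ t in Ioc 0 1, |deriv g t| := by
    rw [← hg.integral_deriv_eq_sub, intervalIntegral.integral_of_le zero_le_one]
    exact abs_integral_le_integral_abs
  exact (ENNReal.ofReal_le_ofReal (hΨ.mono (abs_nonneg _) hle)).trans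
    (hΨ.ofReal_map_integral_le_lintegral hint fun _ => abs_nonneg _)

lemma abs_deriv_comp_lineMap_le {x y : V} {t : ℝ} (hv : DifferentiableAt ℝ v (lineMap x y t)) :
    |deriv (fun t => v (lineMap x y t)) t| ≤ dist x y * ‖fderiv ℝ v (lineMap x y t)‖ := by
  have h := hv.hasFDerivAt.comp_hasDerivAt t (hasDerivAt_lineMap (a := x) (b := y))
  rw [show deriv (fun t => v (lineMap x y t)) t = _ from h.deriv, mul_comm, dist_comm,
    dist_eq_norm]
  exact (fderiv ℝ v (lineMap x y t)).le_opNorm (y - x)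

lemma IsYoungFunction.ofReal_map_abs_sub_le_lintegral_fderiv (hΨ : IsYoungFunction Ψ)
    (hv : LipschitzWith K v) {x y : V} {D : ℝ} (hD : dist x y ≤ D)
    (hd : ∀ᵐ t ∂volume.restrict (Ioc (0 : ℝ) 1), DifferentiableAt ℝ v (lineMap x y t)) :
    ENNReal.ofReal (Ψ |v y - v x|) ≤
      ∫⁻ t in Ioc (0 : ℝ) 1, ENNReal.ofReal (Ψ (D * ‖fderiv ℝ v (lineMap x y t)‖)) := by
  have hlip : LipschitzWith (K * nndist x y) fun t : ℝ => v (lineMap x y t) :=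
    hv.comp (lipschitzWith_lineMap x y)
  have hinc := hΨ.ofReal_map_abs_sub_le_lintegral_deriv
    (hlip.lipschitzOnWith (s := uIcc 0 1)).absolutelyContinuousOnInterval
  rw [lineMap_apply_one, lineMap_apply_zero] at hinc
  refine hinc.trans (lintegral_mono_ae ?_)
  filter_upwards [hd] with t ht
  exact ENNReal.ofReal_le_ofReal <| hΨ.mono (abs_nonneg _) <|
    (abs_deriv_comp_lineMap_le ht).trans (by gcongr)

end Segments

section Poincare

open AffineMap Module

variable {V : Type*} [NormedAddCommGroup V] [NormedSpace ℝ V] [FiniteDimensional ℝ V]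
  [MeasurableSpace V] [BorelSpace V] {μ : Measure V} [μ.IsAddHaarMeasure]
  {s : Set V} {v : V → ℝ} {K : ℝ≥0} {Ψ : ℝ → ℝ}

lemma map_lineMap_addHaar (x : V) {c : ℝ} (hc : c ≠ 0) :
    μ.map (fun y => lineMap x y c) = ENNReal.ofReal |(c ^ finrank ℝ V)⁻¹| • μ := by
  have hcomp : (fun y => lineMap x y c) = (fun w => (1 - c) • x + w) ∘ fun y => c • y :=
    funext fun y => lineMap_apply_module x y c
  rw [hcomp, ← Measure.map_map (by fun_prop) (by fun_prop), Measure.map_addHaar_smul μ hc,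
    Measure.map_smul, map_add_left_eq_self]

lemma ae_ae_differentiableAt_lineMap (hv : LipschitzWith K v) (x : V) :
    ∀ᵐ y ∂μ, ∀ᵐ t ∂volume.restrict (Ioc (0 : ℝ) 1), DifferentiableAt ℝ v (lineMap x y t) := by
  have hmeas : Measurable fun z : ℝ × V => lineMap x z.2 z.1 := Continuous.measurable (by fun_prop)
  refine (Measure.ae_ae_comm (p := fun (t : ℝ) y => DifferentiableAt ℝ v (lineMap x y t))
    (hmeas (measurableSet_of_differentiableAt ℝ v))).1 ?_
  filter_upwards [ae_restrict_mem measurableSet_Ioc] with t ht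
  refine ae_of_ae_map (Continuous.aemeasurable (by fun_prop)) ?_
  rw [map_lineMap_addHaar x ht.1.ne']
  exact Measure.ae_smul_measure hv.ae_differentiableAt _

lemma setLIntegral_comp_lineMap_le {g : V → ℝ≥0∞} (hg : Measurable g) (hs : MeasurableSet s)
    (hconv : Convex ℝ s) {x : V} (hx : x ∈ s) {c : ℝ} (hc : c ∈ Icc (1 / 2) 1) :
    ∫⁻ y in s, g (lineMap x y c) ∂μ ≤ 2 ^ finrank ℝ V * ∫⁻ y in s, g y ∂μ := by
  have hc0 : 0 < c := by linarith [hc.1]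
  have hmeas : Measurable fun y => lineMap x y c := Continuous.measurable (by fun_prop)
  have hjac : ENNReal.ofReal |(c ^ finrank ℝ V)⁻¹| ≤ 2 ^ finrank ℝ V := by
    rw [abs_of_pos (by positivity), ← inv_pow, ENNReal.ofReal_pow (by positivity)]
    gcongr
    rw [← ENNReal.ofReal_ofNat 2]
    exact ENNReal.ofReal_le_ofReal (inv_le_of_inv_le₀ two_pos (by linarith [hc.1]))
  rw [← lintegral_indicator hs, ← lintegral_indicator hs]
  calc ∫⁻ y, s.indicator (fun y => g (lineMap x y c)) y ∂μ
      ≤ ∫⁻ y, s.indicator g (lineMap x y c) ∂μ := by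
        refine lintegral_mono fun y => indicator_apply_le' (fun hy => ?_) fun _ => zero_le
        rw [indicator_of_mem (hconv.lineMap_mem hx hy ⟨hc0.le, hc.2⟩)]
    _ = ∫⁻ y, s.indicator g y ∂μ.map (fun y => lineMap x y c) :=
        (lintegral_map (hg.indicator hs) hmeas).symm
    _ = ENNReal.ofReal |(c ^ finrank ℝ V)⁻¹| * ∫⁻ y, s.indicator g y ∂μ := by
        rw [map_lineMap_addHaar x hc0.ne', lintegral_smul_measure, smul_eq_mul]
    _ ≤ 2 ^ finrank ℝ V * ∫⁻ y, s.indicator g y ∂μ := by gcongr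

-- Swapping `x` and `y` turns `t` into `1 - t`, so that the homothety contracting by the larger of
-- the two ratios, whose Jacobian is at least `2⁻ᵈ`, can be used for every `t`.
lemma lintegral_lintegral_comp_lineMap_le {g : V → ℝ≥0∞} (hg : Measurable g)
    (hs : MeasurableSet s) (hconv : Convex ℝ s) {t : ℝ} (ht : t ∈ Icc 0 1) :
    ∫⁻ x in s, ∫⁻ y in s, g (lineMap x y t) ∂μ ∂μ ≤
      2 ^ finrank ℝ V * μ s * ∫⁻ x in s, g x ∂μ := by
  wlog hhalf : 1 / 2 ≤ t generalizing t
  · have hmeas : Measurable fun z : V × V => g (lineMap z.1 z.2 t) :=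
      hg.comp (Continuous.measurable (by fun_prop))
    rw [lintegral_lintegral_swap hmeas.aemeasurable]
    simp_rw [← lineMap_apply_one_sub _ _ t]
    exact this ⟨by linarith [ht.2], by linarith [ht.1]⟩ (by linarith)
  refine (setLIntegral_mono' hs fun x hx =>
    setLIntegral_comp_lineMap_le hg hs hconv hx ⟨hhalf, ht.2⟩).trans_eq ?_
  rw [setLIntegral_const]
  ring

theorem IsYoungFunction.lintegral_lintegral_abs_sub_le (hΨ : IsYoungFunction Ψ)
    (hv : LipschitzWith K v) (hs : MeasurableSet s) (hconv : Convex ℝ s) {D : ℝ}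
    (hD : ∀ x ∈ s, ∀ y ∈ s, dist x y ≤ D) :
    ∫⁻ x in s, ∫⁻ y in s, ENNReal.ofReal (Ψ |v y - v x|) ∂μ ∂μ ≤
      2 ^ finrank ℝ V * μ s * ∫⁻ x in s, ENNReal.ofReal (Ψ (D * ‖fderiv ℝ v x‖)) ∂μ := by
  set g : V → ℝ≥0∞ := fun x => ENNReal.ofReal (Ψ (D * ‖fderiv ℝ v x‖))
  have hg : Measurable g :=
    (hΨ.continuous.measurable.comp ((measurable_fderiv ℝ v).norm.const_mul D)).ennreal_ofReal
  have hseg : Measurable fun z : (V × ℝ) × V => g (lineMap z.1.1 z.2 z.1.2) :=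
    hg.comp (Continuous.measurable (by fun_prop))
  have hseg_swap (x : V) : Measurable fun z : V × ℝ => g (lineMap x z.1 z.2) :=
    hg.comp (Continuous.measurable (by fun_prop))
  calc ∫⁻ x in s, ∫⁻ y in s, ENNReal.ofReal (Ψ |v y - v x|) ∂μ ∂μ
      ≤ ∫⁻ x in s, ∫⁻ y in s, (∫⁻ t in Ioc (0 : ℝ) 1, g (lineMap x y t)) ∂μ ∂μ := by
        refine setLIntegral_mono' hs fun x hx => lintegral_mono_ae ?_
        filter_upwards [ae_restrict_mem hs,
          ae_restrict_of_ae (ae_ae_differentiableAt_lineMap hv x)] with y hy hd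
        exact hΨ.ofReal_map_abs_sub_le_lintegral_fderiv hv (hD x hx y hy) hd
    _ = ∫⁻ x in s, (∫⁻ t in Ioc (0 : ℝ) 1, ∫⁻ y in s, g (lineMap x y t) ∂μ) ∂μ :=
        lintegral_congr fun x => lintegral_lintegral_swap (hseg_swap x).aemeasurable
    _ = ∫⁻ t in Ioc (0 : ℝ) 1, ∫⁻ x in s, ∫⁻ y in s, g (lineMap x y t) ∂μ ∂μ :=
        lintegral_lintegral_swap hseg.lintegral_prod_right'.aemeasurable
    _ ≤ ∫⁻ _ in Ioc (0 : ℝ) 1, 2 ^ finrank ℝ V * μ s * ∫⁻ x in s, g x ∂μ :=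
        setLIntegral_mono' measurableSet_Ioc fun _ ht =>
          lintegral_lintegral_comp_lineMap_le hg hs hconv ⟨ht.1.le, ht.2⟩
    _ = 2 ^ finrank ℝ V * μ s * ∫⁻ x in s, g x ∂μ := by simp

end Poincare

section Gradient

variable {n : ℕ}

lemma gnorm_nonneg (u : En n → ℝ) (x : En n) : 0 ≤ gnorm u x := norm_nonneg _

lemma measurable_gnorm (u : En n → ℝ) : Measurable (gnorm u) := (measurable_fderiv ℝ u).norm

lemma gnorm_le_of_lipschitzWith {u : En n → ℝ} {K : ℝ≥0} (hu : LipschitzWith K u) (x : En n) :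
    gnorm u x ≤ K :=
  norm_fderiv_le_of_lipschitz ℝ hu

lemma gnorm_mul_le {u v : En n → ℝ} {x : En n} (hu : DifferentiableAt ℝ u x)
    (hv : DifferentiableAt ℝ v x) :
    gnorm (fun y => u y * v y) x ≤ |u x| * gnorm v x + |v x| * gnorm u x := by
  rw [gnorm, fderiv_fun_mul hu hv]
  exact (norm_add_le _ _).trans_eq (by simp only [norm_smul, Real.norm_eq_abs, gnorm])

lemma gnorm_comp_add_smul (u : En n → ℝ) (z : En n) {r : ℝ} (hr : 0 ≤ r) (x : En n) :
    gnorm (fun x => u (z + r • x)) x = r * gnorm u (z + r • x) := by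
  rw [gnorm, fderiv_comp_smul (f := fun y => u (z + y)), fderiv_comp_add_left, norm_smul,
    Real.norm_of_nonneg hr, gnorm]

end Gradient

section Capacity

variable {n : ℕ} {ψ : En n → ℝ → ℝ} {E O : Set (En n)} {t : ℝ}

lemma capInfGen_mul_le_setIntegral {ψm : ℝ → ℝ} (hO : MeasurableSet O)
    (hψ : ∀ x ∈ O, ∀ s, 0 ≤ s → 0 ≤ ψ x s) (hψm : ∀ s, 0 ≤ s → 0 ≤ ψm s) (ht : 0 < t)
    {w : En n → ℝ} (hw : w ∈ Adm E O t) :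
    capInfGen ψ ψm E O * ψm t ≤ ∫ x in O, ψ x (gnorm w x) := by
  have hnonneg (s : ℝ) (hs : 0 < s) (w : En n → ℝ) : 0 ≤ ∫ x in O, ψ x (gnorm w x) / ψm s :=
    setIntegral_nonneg hO fun x hx => div_nonneg (hψ x hx _ (gnorm_nonneg w x)) (hψm s hs.le)
  have hinf : capInfGen ψ ψm E O ≤ capLevel ψ ψm E O t := by
    refine ciInf_le ⟨0, ?_⟩ (⟨t, ht⟩ : Ioi (0 : ℝ))
    rintro _ ⟨s, rfl⟩
    refine Real.sInf_nonneg ?_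
    rintro _ ⟨w, -, rfl⟩
    exact hnonneg s s.2 w
  have hlevel : capLevel ψ ψm E O t ≤ (∫ x in O, ψ x (gnorm w x)) / ψm t := by
    rw [← integral_div]
    refine csInf_le ⟨0, ?_⟩ ⟨w, hw, rfl⟩
    rintro _ ⟨w, -, rfl⟩
    exact hnonneg t ht w
  exact mul_le_of_le_div₀ (setIntegral_nonneg hO fun x hx => hψ x hx _ (gnorm_nonneg w x))
    (hψm t ht.le) (hinf.trans hlevel)

/-- The cutoff function turning Lipschitz functions into test functions for the capacity in the
unit ball: it is at least `1` on the ball of radius `1 / 2` and vanishes on the unit sphere. It is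
not truncated at `1`, since only lower bounds on `E` are needed. -/
def unitBallCutoff (x : En n) : ℝ := 2 * (1 - ‖x‖)

lemma lipschitzWith_unitBallCutoff : LipschitzWith 2 (unitBallCutoff : En n → ℝ) := by
  refine LipschitzWith.of_dist_le_mul fun x y => ?_
  have hdiff : unitBallCutoff x - unitBallCutoff y = 2 * (‖y‖ - ‖x‖) := by
    simp only [unitBallCutoff]
    ring
  rw [Real.dist_eq, hdiff, abs_mul, abs_two, dist_eq_norm, norm_sub_rev, NNReal.coe_ofNat]
  exact mul_le_mul_of_nonneg_left (abs_norm_sub_norm_le y x) zero_le_two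

lemma abs_unitBallCutoff_le {x : En n} (hx : x ∈ ball 0 1) : |unitBallCutoff x| ≤ 2 := by
  have hx1 := mem_ball_zero_iff.1 hx
  rw [unitBallCutoff, abs_of_nonneg (by linarith)]
  linarith [norm_nonneg x]

lemma unitBallCutoff_mul_mem_Adm {f : En n → ℝ} {K : ℝ≥0} (hf : LipschitzWith K f)
    (hE : E ⊆ closedBall 0 (1 / 2)) (ht : 0 ≤ t) (hfE : ∀ x ∈ E, t ≤ f x) :
    (fun x => unitBallCutoff x * f x) ∈ Adm E (ball 0 1) t := by
  refine ⟨?_, fun x hx => ?_, fun x hx => ?_⟩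
  · have hmul : LocallyLipschitz fun p : ℝ × ℝ => p.1 * p.2 :=
      (contDiff_fst.mul contDiff_snd).locallyLipschitz (𝕂 := ℝ)
    rw [closure_ball 0 one_ne_zero]
    exact LocallyLipschitzOn.exists_lipschitzOnWith_of_compact (isCompact_closedBall 0 1)
      (hmul.comp (lipschitzWith_unitBallCutoff.locallyLipschitz.prodMk
        hf.locallyLipschitz)).locallyLipschitzOn
  · have hx2 : ‖x‖ ≤ 1 / 2 := mem_closedBall_zero_iff.1 (hE hx)
    exact (hfE x hx).trans <| le_mul_of_one_le_left (ht.trans (hfE x hx)) <| by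
      rw [unitBallCutoff]
      linarith
  · rw [frontier_ball 0 one_ne_zero, mem_sphere_zero_iff_norm] at hx
    simp [unitBallCutoff, hx]

lemma gnorm_unitBallCutoff_mul_le {f : En n → ℝ} {x : En n} (hx : x ∈ ball 0 1)
    (hη : DifferentiableAt ℝ unitBallCutoff x) (hf : DifferentiableAt ℝ f x) :
    gnorm (fun y => unitBallCutoff y * f y) x ≤ 2 * gnorm f x + 2 * |f x| := by
  refine (gnorm_mul_le hη hf).trans ?_
  rw [mul_comm |f x|]
  gcongr
  · exact gnorm_nonneg f x
  · exact abs_unitBallCutoff_le hx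
  · exact gnorm_le_of_lipschitzWith lipschitzWith_unitBallCutoff x

end Capacity

section BoundaryPoincare

/-- The integrand `ψ` is comparable on `s` to the `x`-independent profile `Ψ`, with constant `M`
in the upper bound; the lower bound has constant `1`, as for `φ` and `φ_O^-`. -/
structure IsComparableOn {X : Type*} (ψ : X → ℝ → ℝ) (Ψ : ℝ → ℝ) (M : ℝ≥0) (s : Set X) :
    Prop where
  ge : ∀ x ∈ s, ∀ t, 0 ≤ t → Ψ t ≤ ψ x t
  le : ∀ x ∈ s, ∀ t, 0 ≤ t → ψ x t ≤ M * Ψ t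

section Comparable

variable {X : Type*} {ψ : X → ℝ → ℝ} {Ψ : ℝ → ℝ} {M : ℝ≥0} {s : Set X}

lemma IsComparableOn.nonneg (hψ : IsComparableOn ψ Ψ M s) (hΨ : IsYoungFunction Ψ) {x : X}
    (hx : x ∈ s) {t : ℝ} (ht : 0 ≤ t) : 0 ≤ ψ x t :=
  (hΨ.nonneg t ht).trans (hψ.ge x hx t ht)

variable [MeasurableSpace X] {μ : Measure X} {g : X → ℝ}

lemma IsComparableOn.ae_nonneg (hψ : IsComparableOn ψ Ψ M s) (hΨ : IsYoungFunction Ψ)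
    (hs : MeasurableSet s) (hg : ∀ x, 0 ≤ g x) : ∀ᵐ x ∂μ.restrict s, 0 ≤ ψ x (g x) := by
  filter_upwards [ae_restrict_mem hs] with x hx using hψ.nonneg hΨ hx (hg x)

lemma IsComparableOn.le_setLIntegral (hψ : IsComparableOn ψ Ψ M s) (hs : MeasurableSet s)
    (hg : ∀ x, 0 ≤ g x) :
    ∫⁻ x in s, ENNReal.ofReal (Ψ (g x)) ∂μ ≤ ∫⁻ x in s, ENNReal.ofReal (ψ x (g x)) ∂μ :=
  setLIntegral_mono' hs fun x hx => ENNReal.ofReal_le_ofReal (hψ.ge x hx _ (hg x))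

lemma IsComparableOn.setLIntegral_le (hψ : IsComparableOn ψ Ψ M s) (hs : MeasurableSet s)
    (hg : ∀ x, 0 ≤ g x) :
    ∫⁻ x in s, ENNReal.ofReal (ψ x (g x)) ∂μ ≤ M * ∫⁻ x in s, ENNReal.ofReal (Ψ (g x)) ∂μ := by
  rw [← lintegral_const_mul' _ _ ENNReal.coe_ne_top]
  refine setLIntegral_mono' hs fun x hx => ?_
  rw [← ofReal_coe_mul]
  exact ENNReal.ofReal_le_ofReal (hψ.le x hx _ (hg x))

lemma IsComparableOn.integrableOn (hψ : IsComparableOn ψ Ψ M s) (hΨ : IsYoungFunction Ψ)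
    (hs : MeasurableSet s) (hμs : μ s ≠ ⊤) (hmeas : Measurable fun x => ψ x (g x))
    (hg : ∀ x, 0 ≤ g x) {K : ℝ} (hgK : ∀ x, g x ≤ K) :
    IntegrableOn (fun x => ψ x (g x)) s μ := by
  refine Measure.integrableOn_of_bounded (M := M * Ψ K) hμs hmeas.aestronglyMeasurable ?_
  filter_upwards [ae_restrict_mem hs] with x hx
  rw [Real.norm_of_nonneg (hψ.nonneg hΨ hx (hg x))]
  exact (hψ.le x hx _ (hg x)).trans <|
    mul_le_mul_of_nonneg_left (hΨ.mono (hg x) (hgK x)) M.coe_nonneg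

end Comparable

variable {n : ℕ} {ψ : En n → ℝ → ℝ} {Ψ : ℝ → ℝ} {c C M K : ℝ≥0} {E : Set (En n)} {f v : En n → ℝ}

lemma IsComparableOn.map_gnorm_unitBallCutoff_mul_le (hψ : IsComparableOn ψ Ψ M (ball 0 1))
    (hΨ : IsDoublingYoungFunction Ψ C) {x : En n} (hx : x ∈ ball 0 1)
    (hη : DifferentiableAt ℝ unitBallCutoff x) (hf : DifferentiableAt ℝ f x) :
    ψ x (gnorm (fun y => unitBallCutoff y * f y) x) ≤
      (M * C ^ 2 : ℝ≥0) * (Ψ (gnorm f x) + Ψ |f x|) := by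
  set w : En n → ℝ := fun y => unitBallCutoff y * f y
  calc ψ x (gnorm w x) ≤ M * Ψ (gnorm w x) := hψ.le x hx _ (gnorm_nonneg w x)
    _ ≤ M * Ψ (2 * gnorm f x + 2 * |f x|) := by
        gcongr
        exact hΨ.mono (gnorm_nonneg w x) (gnorm_unitBallCutoff_mul_le hx hη hf)
    _ ≤ M * (C ^ 2 * (Ψ (gnorm f x) + Ψ |f x|)) := by
        gcongr
        exact hΨ.map_two_mul_add_le (gnorm_nonneg f x) (abs_nonneg _)
    _ = (M * C ^ 2 : ℝ≥0) * (Ψ (gnorm f x) + Ψ |f x|) := by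
        push_cast
        ring

lemma mul_ofReal_le_lintegral_of_le_capInfGen (hΨ : IsDoublingYoungFunction Ψ C)
    (hψ : IsComparableOn ψ Ψ M (ball 0 1)) (hE : E ⊆ closedBall 0 (1 / 2))
    (hcap : c ≤ capInfGen ψ Ψ E (ball 0 1)) (hf : LipschitzWith K f) {t : ℝ} (ht : 0 < t)
    (hfE : ∀ x ∈ E, t ≤ f x) :
    c * ENNReal.ofReal (Ψ t) ≤ (M * C ^ 2 : ℝ≥0) *
      ∫⁻ x in ball 0 1, (ENNReal.ofReal (Ψ (gnorm f x)) + ENNReal.ofReal (Ψ |f x|)) := by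
  set w : En n → ℝ := fun x => unitBallCutoff x * f x
  have hcapw : c * Ψ t ≤ ∫ x in ball 0 1, ψ x (gnorm w x) :=
    (mul_le_mul_of_nonneg_right hcap (hΨ.nonneg t ht.le)).trans <|
      capInfGen_mul_le_setIntegral measurableSet_ball
        (fun x hx s hs => hψ.nonneg hΨ.toIsYoungFunction hx hs) hΨ.nonneg ht
        (unitBallCutoff_mul_mem_Adm hf hE ht.le hfE)
  have hpoint : ∀ᵐ x ∂volume.restrict (ball 0 1), ENNReal.ofReal (ψ x (gnorm w x)) ≤
      (M * C ^ 2 : ℝ≥0) * (ENNReal.ofReal (Ψ (gnorm f x)) + ENNReal.ofReal (Ψ |f x|)) := by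
    filter_upwards [ae_restrict_mem measurableSet_ball, ae_restrict_of_ae hf.ae_differentiableAt,
      ae_restrict_of_ae lipschitzWith_unitBallCutoff.ae_differentiableAt] with x hx hfx hηx
    rw [← ENNReal.ofReal_add (hΨ.nonneg _ (gnorm_nonneg f x)) (hΨ.nonneg _ (abs_nonneg _)),
      ← ofReal_coe_mul]
    exact ENNReal.ofReal_le_ofReal (hψ.map_gnorm_unitBallCutoff_mul_le hΨ hx hηx hfx)
  calc c * ENNReal.ofReal (Ψ t) = ENNReal.ofReal (c * Ψ t) := (ofReal_coe_mul c _).symm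
    _ ≤ ENNReal.ofReal (∫ x in ball 0 1, ψ x (gnorm w x)) := ENNReal.ofReal_le_ofReal hcapw
    _ ≤ ∫⁻ x in ball 0 1, ENNReal.ofReal (ψ x (gnorm w x)) :=
        ofReal_integral_le_lintegral_ofReal <|
          hψ.ae_nonneg hΨ.toIsYoungFunction measurableSet_ball (gnorm_nonneg w)
    _ ≤ _ := (lintegral_mono_ae hpoint).trans_eq
        (lintegral_const_mul' _ _ ENNReal.coe_ne_top)

lemma mul_ofReal_le_lintegral_of_eq_zero (hΨ : IsDoublingYoungFunction Ψ C)
    (hψ : IsComparableOn ψ Ψ M (ball 0 1)) (hE : E ⊆ closedBall 0 (1 / 2))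
    (hcap : c ≤ capInfGen ψ Ψ E (ball 0 1)) (hv : LipschitzWith K v) (hvE : ∀ x ∈ E, v x = 0)
    (d : ℝ) :
    c * ENNReal.ofReal (Ψ |d|) ≤ (M * C ^ 2 : ℝ≥0) *
      ∫⁻ x in ball 0 1, (ENNReal.ofReal (Ψ (gnorm v x)) + ENNReal.ofReal (Ψ |v x - d|)) := by
  rcases lt_trichotomy d 0 with hd | rfl | hd
  · have hlip : LipschitzWith K fun x => v x - d := by
      simpa using hv.sub (LipschitzWith.const d)
    have hmain := mul_ofReal_le_lintegral_of_le_capInfGen hΨ hψ hE hcap hlip (neg_pos.2 hd)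
      fun x hx => by simp [hvE x hx]
    simpa only [abs_of_neg hd, gnorm, fderiv_sub_const] using hmain
  · simp [hΨ.map_zero]
  · have hlip : LipschitzWith K fun x => d - v x := by
      simpa using (LipschitzWith.const d).sub hv
    have hmain := mul_ofReal_le_lintegral_of_le_capInfGen hΨ hψ hE hcap hlip hd
      fun x hx => by simp [hvE x hx]
    simpa only [abs_of_pos hd, gnorm, fderiv_const_sub, norm_neg, abs_sub_comm d] using hmain

lemma IsDoublingYoungFunction.lintegral_lintegral_ball_abs_sub_le
    (hΨ : IsDoublingYoungFunction Ψ C) (hv : LipschitzWith K v) :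
    ∫⁻ y in ball 0 1, ∫⁻ x in ball 0 1, ENNReal.ofReal (Ψ |v x - v y|) ≤
      2 ^ n * volume (ball (0 : En n) 1) *
        (C * ∫⁻ x in ball 0 1, ENNReal.ofReal (Ψ (gnorm v x))) := by
  have hdist (x : En n) (hx : x ∈ ball 0 1) (y : En n) (hy : y ∈ ball 0 1) : dist x y ≤ 2 :=
    (dist_triangle_right x y 0).trans (by linarith [mem_ball.1 hx, mem_ball.1 hy])
  have hpoincare := hΨ.lintegral_lintegral_abs_sub_le (μ := volume) hv measurableSet_ball
    (convex_ball 0 1) hdist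
  rw [finrank_euclideanSpace_fin] at hpoincare
  refine hpoincare.trans (mul_le_mul_right ?_ _)
  rw [← lintegral_const_mul' _ _ ENNReal.coe_ne_top]
  refine lintegral_mono fun x => ?_
  rw [← ofReal_coe_mul]
  exact ENNReal.ofReal_le_ofReal (hΨ.doubling _ (gnorm_nonneg v x))

lemma mul_lintegral_profile_abs_le (hΨ : IsDoublingYoungFunction Ψ C)
    (hψ : IsComparableOn ψ Ψ M (ball 0 1)) (hE : E ⊆ closedBall 0 (1 / 2))
    (hcap : c ≤ capInfGen ψ Ψ E (ball 0 1)) (hv : LipschitzWith K v) (hvE : ∀ x ∈ E, v x = 0) :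
    c * ∫⁻ x in ball 0 1, ENNReal.ofReal (Ψ |v x|) ≤
      (M * C ^ 2 * (1 + 2 ^ n * C) : ℝ≥0) * volume (ball (0 : En n) 1) *
        ∫⁻ x in ball 0 1, ENNReal.ofReal (Ψ (gnorm v x)) := by
  set G := ∫⁻ x in ball 0 1, ENNReal.ofReal (Ψ (gnorm v x)) with hG
  have hmeas : Measurable fun x => ENNReal.ofReal (Ψ (gnorm v x)) :=
    (hΨ.continuous.measurable.comp (measurable_gnorm v)).ennreal_ofReal
  calc c * ∫⁻ y in ball 0 1, ENNReal.ofReal (Ψ |v y|)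
      = ∫⁻ y in ball 0 1, c * ENNReal.ofReal (Ψ |v y|) :=
        (lintegral_const_mul' _ _ ENNReal.coe_ne_top).symm
    _ ≤ ∫⁻ y in ball 0 1, (M * C ^ 2 : ℝ≥0) *
          (G + ∫⁻ x in ball 0 1, ENNReal.ofReal (Ψ |v x - v y|)) := by
        refine lintegral_mono fun y => ?_
        rw [hG, ← lintegral_add_left hmeas]
        exact mul_ofReal_le_lintegral_of_eq_zero hΨ hψ hE hcap hv hvE (v y)
    _ = (M * C ^ 2 : ℝ≥0) * (G * volume (ball (0 : En n) 1) +
          ∫⁻ y in ball 0 1, ∫⁻ x in ball 0 1, ENNReal.ofReal (Ψ |v x - v y|)) := by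
        rw [lintegral_const_mul' _ _ ENNReal.coe_ne_top, lintegral_add_left measurable_const,
          setLIntegral_const]
    _ ≤ (M * C ^ 2 : ℝ≥0) * (G * volume (ball (0 : En n) 1) +
          2 ^ n * volume (ball (0 : En n) 1) * (C * G)) := by
        gcongr
        exact hΨ.lintegral_lintegral_ball_abs_sub_le hv
    _ = _ := by
        push_cast
        ring

/-- The constant of the boundary Poincaré inequality in dimension `n`, before division by the
fatness parameter, for an integrand comparable with constant `M` to a Young function with doubling
constant `C`. -/
def boundaryPoincareConst (n : ℕ) (C M : ℝ≥0) : ℝ≥0 :=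
  M ^ 2 * C ^ 2 * (1 + 2 ^ n * C) * (volume (ball (0 : En n) 1)).toNNReal

lemma boundaryPoincareConst_pos (n : ℕ) {C M : ℝ≥0} (hC : 0 < C) (hM : 0 < M) :
    0 < boundaryPoincareConst n C M := by
  have hvol : 0 < (volume (ball (0 : En n) 1)).toNNReal :=
    ENNReal.toNNReal_pos (measure_ball_pos _ _ one_pos).ne' measure_ball_lt_top.ne
  unfold boundaryPoincareConst
  positivity

lemma mul_lintegral_comparable_abs_le (hΨ : IsDoublingYoungFunction Ψ C)
    (hψ : IsComparableOn ψ Ψ M (ball 0 1)) (hE : E ⊆ closedBall 0 (1 / 2))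
    (hcap : c ≤ capInfGen ψ Ψ E (ball 0 1)) (hv : LipschitzWith K v) (hvE : ∀ x ∈ E, v x = 0) :
    c * ∫⁻ x in ball 0 1, ENNReal.ofReal (ψ x |v x|) ≤
      boundaryPoincareConst n C M * ∫⁻ x in ball 0 1, ENNReal.ofReal (ψ x (gnorm v x)) := by
  have hconst : (boundaryPoincareConst n C M : ℝ≥0∞) =
      M * ((M * C ^ 2 * (1 + 2 ^ n * C) : ℝ≥0) * volume (ball (0 : En n) 1)) := by
    rw [boundaryPoincareConst, ENNReal.coe_mul, ENNReal.coe_toNNReal measure_ball_lt_top.ne]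
    push_cast
    ring
  calc c * ∫⁻ x in ball 0 1, ENNReal.ofReal (ψ x |v x|)
      ≤ c * (M * ∫⁻ x in ball 0 1, ENNReal.ofReal (Ψ |v x|)) := by
        gcongr
        exact hψ.setLIntegral_le measurableSet_ball fun x => abs_nonneg _
    _ = M * (c * ∫⁻ x in ball 0 1, ENNReal.ofReal (Ψ |v x|)) := mul_left_comm _ _ _
    _ ≤ M * ((M * C ^ 2 * (1 + 2 ^ n * C) : ℝ≥0) * volume (ball (0 : En n) 1) *
          ∫⁻ x in ball 0 1, ENNReal.ofReal (ψ x (gnorm v x))) := by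
        refine mul_le_mul_right ((mul_lintegral_profile_abs_le hΨ hψ hE hcap hv hvE).trans ?_) _
        exact mul_le_mul_right (hψ.le_setLIntegral measurableSet_ball (gnorm_nonneg v)) _
    _ = _ := by rw [← mul_assoc, ← hconst]

theorem boundary_poincare_unitBall (hΨ : IsDoublingYoungFunction Ψ C)
    (hψ : IsComparableOn ψ Ψ M (ball 0 1)) (hE : E ⊆ closedBall 0 (1 / 2))
    (hcap : c ≤ capInfGen ψ Ψ E (ball 0 1)) (hv : LipschitzWith K v) (hvE : ∀ x ∈ E, v x = 0)
    (hmeas : Measurable fun x => ψ x (gnorm v x)) :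
    c * ∫ x in ball 0 1, ψ x |v x| ≤
      boundaryPoincareConst n C M * ∫ x in ball 0 1, ψ x (gnorm v x) := by
  have hgrad0 : ∀ᵐ x ∂volume.restrict (ball 0 1), 0 ≤ ψ x (gnorm v x) :=
    hψ.ae_nonneg hΨ.toIsYoungFunction measurableSet_ball (gnorm_nonneg v)
  have hgrad : IntegrableOn (fun x => ψ x (gnorm v x)) (ball 0 1) :=
    hψ.integrableOn hΨ.toIsYoungFunction measurableSet_ball measure_ball_lt_top.ne hmeas
      (gnorm_nonneg v) (gnorm_le_of_lipschitzWith hv)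
  rw [← ENNReal.ofReal_le_ofReal_iff (mul_nonneg NNReal.zero_le_coe
    (integral_nonneg_of_ae hgrad0)), ofReal_coe_mul, ofReal_coe_mul,
    ofReal_integral_eq_lintegral_ofReal hgrad hgrad0]
  refine (mul_le_mul_right ?_ _).trans
    (mul_lintegral_comparable_abs_le hΨ hψ hE hcap hv hvE)
  exact ofReal_integral_le_lintegral_ofReal <|
    hψ.ae_nonneg hΨ.toIsYoungFunction measurableSet_ball fun x => abs_nonneg (v x)

end BoundaryPoincare

section Homothety

variable {V : Type*} [NormedAddCommGroup V] [NormedSpace ℝ V]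

lemma image_add_smul_unitBall (z : V) {r : ℝ} (hr : 0 < r) :
    (fun x => z + r • x) '' ball 0 1 = ball z r := by
  rw [← affinity_unitBall hr z, ← image_smul, ← image_vadd, image_image]
  rfl

lemma lipschitzWith_add_smul (z : V) (r : ℝ) : LipschitzWith ‖r‖₊ fun x => z + r • x := by
  simpa using (LipschitzWith.const z).add (lipschitzWith_smul r)

lemma setAverage_ball_eq_setAverage_unitBall [FiniteDimensional ℝ V] [MeasurableSpace V]
    [BorelSpace V] {μ : Measure V} [μ.IsAddHaarMeasure] (f : V → ℝ) (z : V) {r : ℝ} (hr : 0 < r) :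
    ⨍ x in ball z r, f x ∂μ = ⨍ x in ball 0 1, f (z + r • x) ∂μ := by
  have htranslate : ∫ x in ball 0 r, f (z + x) ∂μ = ∫ x in ball z r, f x ∂μ := by
    simpa using (measurePreserving_add_left μ z).setIntegral_preimage_emb
      (measurableEmbedding_addLeft z) f (ball z r)
  have hvol : μ.real (ball z r) = r ^ Module.finrank ℝ V * μ.real (ball 0 1) := by
    rw [measureReal_def, Measure.addHaar_ball_of_pos μ z hr, ENNReal.toReal_mul,
      ENNReal.toReal_ofReal (by positivity), measureReal_def]
  rw [setAverage_eq, setAverage_eq,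
    Measure.setIntegral_comp_smul_of_pos μ (fun y => f (z + y)) _ hr, smul_unitBall_of_pos hr,
    htranslate, hvol, smul_smul, mul_inv_rev]

end Homothety

section DoublePhase

variable {n : ℕ} {a : En n → ℝ} {p q r : ℝ} {z : En n} {O : Set (En n)} {M : ℝ≥0}

lemma aInfOn_le (ha : ∀ x ∈ O, 0 ≤ a x) {x : En n} (hx : x ∈ O) : aInfOn a O ≤ a x :=
  csInf_le ⟨0, forall_mem_image.2 ha⟩ (mem_image_of_mem a hx)

lemma aInfOn_nonneg (ha : ∀ x ∈ O, 0 ≤ a x) : 0 ≤ aInfOn a O :=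
  Real.sInf_nonneg (forall_mem_image.2 ha)

lemma aInfOn_comp_add_smul_unitBall (a : En n → ℝ) (z : En n) (hr : 0 < r) :
    aInfOn (fun x => a (z + r • x)) (ball 0 1) = aInfOn a (ball z r) := by
  rw [aInfOn, aInfOn, ← image_add_smul_unitBall z hr, image_image]

lemma isDoublingYoungFunction_phiMinus (ha : ∀ x ∈ O, 0 ≤ a x) (hp : 1 ≤ p) (hpq : p ≤ q) :
    IsDoublingYoungFunction (phiMinus a p q O) (2 ^ q) where
  convexOn := (convexOn_rpow hp).add ((convexOn_rpow (hp.trans hpq)).smul (aInfOn_nonneg ha))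
  continuous := (Real.continuous_rpow_const (by linarith)).add
    ((Real.continuous_rpow_const (by linarith)).const_mul _)
  map_zero := by
    simp [phiMinus, Real.zero_rpow (show p ≠ 0 by linarith),
      Real.zero_rpow (show q ≠ 0 by linarith)]
  nonneg t ht := by
    have := aInfOn_nonneg ha
    unfold phiMinus
    positivity
  doubling t ht := by
    have hpow : (2 : ℝ) ^ p ≤ 2 ^ q := Real.rpow_le_rpow_of_exponent_le one_le_two hpq
    calc phiMinus a p q O (2 * t) = 2 ^ p * t ^ p + 2 ^ q * (aInfOn a O * t ^ q) := by
          rw [phiMinus, Real.mul_rpow zero_le_two ht, Real.mul_rpow zero_le_two ht]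
          ring
      _ ≤ 2 ^ q * t ^ p + 2 ^ q * (aInfOn a O * t ^ q) := by gcongr
      _ = ((2 ^ q : ℝ≥0) : ℝ) * phiMinus a p q O t := by
          rw [phiMinus, NNReal.coe_rpow, NNReal.coe_ofNat, mul_add]

lemma isComparableOn_phi (p q : ℝ) (ha : ∀ x ∈ O, 0 ≤ a x) (hM : 1 ≤ M)
    (haM : ∀ x ∈ O, a x ≤ M * aInfOn a O) :
    IsComparableOn (phi a p q) (phiMinus a p q O) M O where
  ge x hx t ht := by
    unfold phi phiMinus
    gcongr
    exact aInfOn_le ha hx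
  le x hx t ht := by
    calc phi a p q x t ≤ 1 * t ^ p + M * aInfOn a O * t ^ q := by
          rw [phi, one_mul]
          gcongr
          exact haM x hx
      _ ≤ M * t ^ p + M * aInfOn a O * t ^ q := by
          gcongr
          exact_mod_cast hM
      _ = M * phiMinus a p q O t := by
          rw [phiMinus]
          ring

lemma measurable_phi_gnorm (ha : Measurable a) (p q : ℝ) (u : En n → ℝ) :
    Measurable fun x => phi a p q x (gnorm u x) :=
  ((measurable_gnorm u).pow_const p).add (ha.mul ((measurable_gnorm u).pow_const q))

theorem boundary_poincare_phi_ball {c K : ℝ≥0} {E : Set (En n)} {u : En n → ℝ} (hp : 1 ≤ p)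
    (hpq : p ≤ q) (hr : 0 < r) (ham : Measurable a) (ha : ∀ x ∈ ball z r, 0 ≤ a x) (hM : 1 ≤ M)
    (haM : ∀ x ∈ ball z r, a x ≤ M * aInfOn a (ball z r))
    (hcap : c ≤ capPhiInf (fun x => a (z + r • x)) p q (shiftedSet E z r) (ball 0 1))
    (hu : LipschitzWith K u) (huE : ∀ x ∈ E, u x = 0) :
    c * ⨍ x in ball z r, phi a p q x |u x| ≤
      boundaryPoincareConst n (2 ^ q) M * ⨍ x in ball z r, phi a p q x (r * gnorm u x) := by
  set b : En n → ℝ := fun x => a (z + r • x)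
  have hball : ∀ x ∈ ball (0 : En n) 1, z + r • x ∈ ball z r := fun x hx =>
    image_add_smul_unitBall z hr ▸ mem_image_of_mem _ hx
  have hb : ∀ x ∈ ball 0 1, 0 ≤ b x := fun x hx => ha _ (hball x hx)
  have hbM : ∀ x ∈ ball 0 1, b x ≤ M * aInfOn b (ball 0 1) := fun x hx => by
    rw [aInfOn_comp_add_smul_unitBall a z hr]
    exact haM _ (hball x hx)
  have hunit := boundary_poincare_unitBall (isDoublingYoungFunction_phiMinus hb hp hpq)
    (isComparableOn_phi p q hb hM hbM) (fun x hx => hx.1) hcap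
    (hu.comp (lipschitzWith_add_smul z r)) (fun x hx => huE _ hx.2)
    (measurable_phi_gnorm (ham.comp (lipschitzWith_add_smul z r).continuous.measurable) p q _)
  rw [setAverage_ball_eq_setAverage_unitBall _ z hr, setAverage_ball_eq_setAverage_unitBall _ z hr,
    setAverage_eq, setAverage_eq, smul_eq_mul, smul_eq_mul, mul_left_comm,
    mul_left_comm (boundaryPoincareConst n (2 ^ q) M : ℝ)]
  simp only [Function.comp_def, gnorm_comp_add_smul u z hr.le] at hunit
  exact mul_le_mul_of_nonneg_left hunit (by positivity)

end DoublePhase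

section HolderPhase

variable {X : Type*} [PseudoMetricSpace X] {a : X → ℝ} {A α : ℝ}

lemma continuous_of_abs_sub_le_mul_rpow (hα : 0 < α)
    (ha : ∀ x y, |a x - a y| ≤ A * dist x y ^ α) : Continuous a := by
  refine continuous_iff_continuousAt.2 fun x => tendsto_iff_dist_tendsto_zero.2 ?_
  refine squeeze_zero (fun _ => dist_nonneg) (fun y => ha y x) ?_
  have : Continuous fun y => A * dist y x ^ α :=
    continuous_const.mul ((continuous_id.dist continuous_const).rpow_const fun _ => Or.inr hα.le)
  simpa [Real.zero_rpow hα.ne'] using this.tendsto x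

lemma abs_sub_le_of_mem_ball (hα : 0 ≤ α) (hα1 : α ≤ 1) (hA : 0 ≤ A)
    (ha : ∀ x y, |a x - a y| ≤ A * dist x y ^ α) {x y z : X} {r : ℝ} (hx : x ∈ ball z r)
    (hy : y ∈ ball z r) : |a x - a y| ≤ 2 * (A * r ^ α) := by
  have hr : 0 ≤ r := dist_nonneg.trans (mem_ball.1 hx).le
  have hdist : dist x y ≤ 2 * r :=
    (dist_triangle_right x y z).trans (by linarith [mem_ball.1 hx, mem_ball.1 hy])
  calc |a x - a y| ≤ A * dist x y ^ α := ha x y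
    _ ≤ A * (2 * r) ^ α := by gcongr
    _ = 2 ^ α * (A * r ^ α) := by
        rw [Real.mul_rpow zero_le_two hr]
        ring
    _ ≤ 2 * (A * r ^ α) := by
        gcongr
        exact Real.rpow_le_self_of_one_le one_le_two hα1

end HolderPhase

lemma le_three_mul_aInfOn_ball {n : ℕ} {a : En n → ℝ} {A α r : ℝ} {z : En n} (hα : 0 ≤ α)
    (hα1 : α ≤ 1) (hA : 0 ≤ A) (ha : ∀ x y, |a x - a y| ≤ A * dist x y ^ α)
    (hphase : A * r ^ α ≤ aInfOn a (ball z r)) {x : En n} (hx : x ∈ ball z r) :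
    a x ≤ 3 * aInfOn a (ball z r) := by
  suffices h : a x - 2 * aInfOn a (ball z r) ≤ aInfOn a (ball z r) by linarith
  refine le_csInf ⟨a x, mem_image_of_mem a hx⟩ (forall_mem_image.2 fun y hy => ?_)
  linarith [le_of_abs_le (abs_sub_le_of_mem_ball hα hα1 hA ha hx hy)]

theorem pq_phase_boundary_poincare_general (n : ℕ) (p q cfat : ℝ) (hp : 1 ≤ p) (hpq : p ≤ q)
    (hcfat : 0 < cfat) :
    ∃ c : ℝ, 0 < c ∧
      ∀ (α A ro : ℝ) (a : En n → ℝ) (E : Set (En n)),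
        0 < α → α ≤ 1 → (∀ x, 0 ≤ a x) → 0 ≤ A →
        (∀ x y, |a x - a y| ≤ A * dist x y ^ α) →
        LocUnifPhiFat a p q E cfat ro →
        ∀ z ∈ E, ∀ r : ℝ, 0 < r → r < ro →
          A * r ^ α ≤ aInfOn a (ball z r) →
          ∀ u : En n → ℝ, (∃ K, LipschitzWith K u) → (∀ x ∈ E, u x = 0) →
            (⨍ x in ball z r, phi a p q x |u x|) ≤
              c * (⨍ x in ball z r, phi a p q x (r * gnorm u x)) := by
  lift cfat to ℝ≥0 using hcfat.le
  have hconst : 0 < boundaryPoincareConst n (2 ^ q) 3 :=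
    boundaryPoincareConst_pos n (by positivity) (by positivity)
  refine ⟨boundaryPoincareConst n (2 ^ q) 3 / cfat, by positivity, ?_⟩
  rintro α A ro a E hα hα1 ha0 hA ha hfat z hz r hr hro hphase u ⟨K, hu⟩ huE
  have hE := boundary_poincare_phi_ball hp hpq hr
    (continuous_of_abs_sub_le_mul_rpow hα ha).measurable (fun x _ => ha0 x) (M := 3) (by norm_num)
    (fun x hx => by exact_mod_cast le_three_mul_aInfOn_ball hα.le hα1 hA ha hphase hx)
    (hfat z hz r hr hro) hu huE
  rwa [div_mul_eq_mul_div, le_div_iff₀' hcfat]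

/-- **Boundary Poincaré inequality in the `(p,q)`-phase** (Remark 7.1): if
`ℝⁿ ∖ Ω` is locally uniformly infimally `φ`-fat and the ball `B(z,r)` is in the
`(p,q)`-phase, i.e. `inf_{B(z,r)} a > [a]_{0,α} r^α`, then
`⨍_{B(z,r)} φ(x,|u|) ≤ c ⨍_{B(z,r)} φ(x, r|∇u|)`. -/
theorem pq_phase_boundary_poincare
    (n : ℕ) (hn : 0 < n) (p q cfat : ℝ)
    (hp : 1 < p) (hpq : p < q) (hcfat : 0 < cfat) :
    ∃ c : ℝ, 0 < c ∧
      ∀ (α A ro : ℝ) (a : En n → ℝ) (Ω : Set (En n)),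
        0 < α → α ≤ 1 → (∀ x, 0 ≤ a x) → 0 ≤ A →
        (∀ x y, |a x - a y| ≤ A * dist x y ^ α) →
        q / p ≤ 1 + α / n →
        IsOpen Ω → 0 < ro → ro ≤ 1 →
        LocUnifPhiFat a p q Ωᶜ cfat ro →
        ∀ z ∈ Ωᶜ, ∀ r : ℝ, 0 < r → r < ro →
          A * r ^ α < aInfOn a (ball z r) →
          ∀ u ∈ Lip0 Ω,
            (⨍ x in ball z r, phi a p q x |u x|) ≤
              c * (⨍ x in ball z r, phi a p q x (r * gnorm u x)) := by
  obtain ⟨c, hc, h⟩ := pq_phase_boundary_poincare_general n p q cfat hp.le hpq.le hcfat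
  refine ⟨c, hc, fun α A ro a Ω hα hα1 ha0 hA ha _ _ _ _ hfat z hz r hr hro hphase u hu => ?_⟩
  exact h α A ro a Ωᶜ hα hα1 ha0 hA ha hfat z hz r hr hro hphase.le u hu.1 fun x hx =>
    image_eq_zero_of_notMem_tsupport fun hxu => hx (hu.2.2 hxu)
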